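/- arXiv:1508.00072 — 3 statements merged into one kernel-verified Lean document; each statement's English description precedes it below -/
import Mathlib

section
/- Let I be a right L(V)-submodule of L(V,W) (i.e., closed under addition and under right composition with arbitrary linear endomorphisms of V). If I is finitely generated as a right L(V)-module, then I = { T ∈ L(V,W) : range T ⊆ im(I) }, where im(I) is the span of the union of the ranges of members of I. -/
variable {D V W : Type*} [DivisionRing D]
  [AddCommGroup V] [Module D V] [AddCommGroup W] [Module D W]

/-- `I` is a right `L(V)`-submodule of `L(V,W)`: closed under addition and
under right composition with arbitrary endomorphisms of `V`. -/
def IsRightSubmodule (I : Set (V →ₗ[D] W)) : Prop :=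
  (0 : V →ₗ[D] W) ∈ I ∧ (∀ S T : V →ₗ[D] W, S ∈ I → T ∈ I → S + T ∈ I) ∧
    (∀ S ∈ I, ∀ A : V →ₗ[D] V, S.comp A ∈ I)

/-- `I` is a left `L(W)`-submodule of `L(V,W)`: closed under addition and
under left composition with arbitrary endomorphisms of `W`. -/
def IsLeftSubmodule (I : Set (V →ₗ[D] W)) : Prop :=
  (0 : V →ₗ[D] W) ∈ I ∧ (∀ S T : V →ₗ[D] W, S ∈ I → T ∈ I → S + T ∈ I) ∧
    (∀ S ∈ I, ∀ A : W →ₗ[D] W, A.comp S ∈ I)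

/-- The image of a family of linear maps: the span of the union of their ranges. -/
def imageOf (I : Set (V →ₗ[D] W)) : Submodule D W :=
  ⨆ T ∈ I, LinearMap.range T

/-- `I` is finitely generated as a right `L(V)`-module. -/
def RightFG (I : Set (V →ₗ[D] W)) : Prop :=
  ∃ (n : ℕ) (T : Fin n → (V →ₗ[D] W)), (∀ i, T i ∈ I) ∧
    ∀ S ∈ I, ∃ P : Fin n → (V →ₗ[D] V), S = ∑ i, (T i).comp (P i)

/-- `I` is finitely generated as a left `L(W)`-module. -/
def LeftFG (I : Set (V →ₗ[D] W)) : Prop :=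
  ∃ (n : ℕ) (T : Fin n → (V →ₗ[D] W)), (∀ i, T i ∈ I) ∧
    ∀ S ∈ I, ∃ P : Fin n → (W →ₗ[D] W), S = ∑ i, (P i).comp (T i)

/-!
Maps `T₁, …, Tₙ : M → N` assemble into a single map `Φ : Mⁿ → N`, whose range is the sum of theirs,
and the combinations `∑ Tᵢ ∘ Pᵢ` are exactly the maps that factor through `Φ`. When `M` is
projective, as every vector space is, a map out of `M` factors through `Φ` as soon as its range lies
in the range of `Φ`.
-/

section Projective

open Submodule

variable {R M N P ι : Type*} [Semiring R] [AddCommMonoid M] [Module R M]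
  [AddCommMonoid N] [Module R N] [AddCommMonoid P] [Module R P]

theorem exists_comp_eq_iff_range_le [Module.Projective R P] {f : M →ₗ[R] N} {g : P →ₗ[R] N} :
    (∃ h : P →ₗ[R] M, f ∘ₗ h = g) ↔ LinearMap.range g ≤ LinearMap.range f := by
  constructor
  · rintro ⟨h, rfl⟩
    exact LinearMap.range_comp_le_range h f
  · intro hgf
    obtain ⟨h, hh⟩ := Module.projective_lifting_property f.rangeRestrict
      (g.codRestrict (LinearMap.range f) fun x => hgf ⟨x, rfl⟩) f.surjective_rangeRestrict
    exact ⟨h, congrArg ((LinearMap.range f).subtype ∘ₗ ·) hh⟩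

theorem range_lsum_eq_iSup_range [Fintype ι] {φ : ι → Type*} [∀ i, AddCommMonoid (φ i)]
    [∀ i, Module R (φ i)] [DecidableEq ι] (T : ∀ i, φ i →ₗ[R] N) :
    LinearMap.range (LinearMap.lsum R φ ℕ T) = ⨆ i, LinearMap.range (T i) := by
  rw [LinearMap.range_eq_map, ← LinearMap.iSup_range_single, Submodule.map_iSup]
  simp only [← LinearMap.range_comp]
  exact iSup_congr fun i =>
    congrArg LinearMap.range (congrFun ((LinearMap.lsum R φ ℕ).symm_apply_apply T) i)

theorem mem_span_range_iff_exists_lsum_comp_eq [Fintype ι] [DecidableEq ι]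
    {T : ι → M →ₗ[R] N} {S : M →ₗ[R] N} :
    S ∈ span (Module.End R M)ᵈᵐᵃ (Set.range T) ↔
      ∃ g : M →ₗ[R] ι → M, LinearMap.lsum R (fun _ => M) ℕ T ∘ₗ g = S := by
  rw [mem_span_range_iff_exists_fun]
  constructor
  · rintro ⟨A, rfl⟩
    refine ⟨LinearMap.pi fun i => DomMulAct.mk.symm (A i), ?_⟩
    ext x
    simp [DomMulAct.smul_linearMap_apply]
  · rintro ⟨g, rfl⟩
    refine ⟨fun i => DomMulAct.mk (LinearMap.proj i ∘ₗ g), ?_⟩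
    ext x
    simp

theorem mem_span_range_iff_range_le_iSup [Finite ι] [Module.Projective R M]
    {T : ι → M →ₗ[R] N} {S : M →ₗ[R] N} :
    S ∈ span (Module.End R M)ᵈᵐᵃ (Set.range T) ↔
      LinearMap.range S ≤ ⨆ i, LinearMap.range (T i) := by
  classical
  have := Fintype.ofFinite ι
  rw [mem_span_range_iff_exists_lsum_comp_eq, exists_comp_eq_iff_range_le,
    range_lsum_eq_iSup_range]

theorem stmt_9_general [Module.Projective R M] {I : Submodule (Module.End R M)ᵈᵐᵃ (M →ₗ[R] N)}
    (hI : I.FG) {S : M →ₗ[R] N} :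
    S ∈ I ↔ LinearMap.range S ≤ ⨆ T ∈ I, LinearMap.range T := by
  refine ⟨fun hS => le_iSup₂_of_le S hS le_rfl, fun hS => ?_⟩
  obtain ⟨n, T, rfl⟩ := fg_iff_exists_fin_generating_family.mp hI
  refine mem_span_range_iff_range_le_iSup.mpr (hS.trans ?_)
  exact iSup₂_le fun _ => mem_span_range_iff_range_le_iSup.mp

end Projective

/-- A right `L(V)`-submodule of `L(V,W)` as a bundled submodule. The right action by precomposition
is encoded as the left action of `L(V)ᵈᵐᵃ`, the opposite ring of `L(V)`. -/
def IsRightSubmodule.toSubmodule {I : Set (V →ₗ[D] W)} (hI : IsRightSubmodule I) :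
    Submodule (Module.End D V)ᵈᵐᵃ (V →ₗ[D] W) where
  carrier := I
  zero_mem' := hI.1
  add_mem' := hI.2.1 _ _
  smul_mem' A S hS := hI.2.2 S hS (DomMulAct.mk.symm A)

theorem RightFG.fg_toSubmodule {I : Set (V →ₗ[D] W)} (hfg : RightFG I) (hI : IsRightSubmodule I) :
    hI.toSubmodule.FG := by
  obtain ⟨n, T, hT, hgen⟩ := hfg
  refine Submodule.fg_iff_exists_fin_generating_family.mpr ⟨n, T, le_antisymm ?_ fun S hS => ?_⟩
  · exact Submodule.span_le.mpr (Set.range_subset_iff.mpr hT)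
  · obtain ⟨P, rfl⟩ := hgen S hS
    exact Submodule.sum_mem _ fun i _ =>
      Submodule.smul_mem _ (DomMulAct.mk (P i)) (Submodule.subset_span ⟨i, rfl⟩)

theorem stmt_9 (I : Set (V →ₗ[D] W)) (hI : IsRightSubmodule I) (hfg : RightFG I) :
    I = {T : V →ₗ[D] W | LinearMap.range T ≤ imageOf I} :=
  Set.ext fun _ => stmt_9_general (hfg.fg_toSubmodule hI)
end

section
/- Let I be a right L(V)-submodule of L(V,W) whose image im(I) (the span of the union of ranges of its elements) is finite-dimensional. Then I is finitely generated as a right L(V)-module, and I = { T ∈ L(V,W) : range T ⊆ im(I) }. -/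
variable {D V W : Type*} [DivisionRing D]
  [AddCommGroup V] [Module D V] [AddCommGroup W] [Module D W]

/-!
Finitely many elements of `I` already have ranges spanning `im I`, so their sum is a linear map from
a finite power of `V` onto `im I`. A map `S` from `V` with range in `im I` lifts through this
surjection because `V` is projective, and the components of the lift exhibit `S` as a right
`L(V)`-linear combination of the chosen elements.
-/

section Projective

variable {R P M N : Type*} [Semiring R] [AddCommMonoid P] [Module R P] [AddCommMonoid M]
  [Module R M] [AddCommMonoid N] [Module R N]

theorem range_lsum {ι : Type*} [Fintype ι] [DecidableEq ι] {Q : ι → Type*}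
    [∀ i, AddCommMonoid (Q i)] [∀ i, Module R (Q i)] (f : ∀ i, Q i →ₗ[R] M) :
    LinearMap.range (LinearMap.lsum R Q ℕ f) = ⨆ i, LinearMap.range (f i) := by
  rw [LinearMap.range_eq_map, ← LinearMap.iSup_range_single, Submodule.map_iSup]
  refine iSup_congr fun i => ?_
  rw [← LinearMap.range_comp]
  exact congrArg LinearMap.range (congrFun ((LinearMap.lsum R Q ℕ).symm_apply_apply f) i)

theorem exists_comp_eq_of_range_le_range [Module.Projective R P] (f : N →ₗ[R] M) (g : P →ₗ[R] M)
    (h : LinearMap.range g ≤ LinearMap.range f) : ∃ k : P →ₗ[R] N, f ∘ₗ k = g := by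
  let g' : P →ₗ[R] LinearMap.range f := g.codRestrict _ fun x => h (LinearMap.mem_range_self g x)
  obtain ⟨k, hk⟩ := Module.projective_lifting_property f.rangeRestrict g' f.surjective_rangeRestrict
  exact ⟨k, congrArg ((LinearMap.range f).subtype ∘ₗ ·) hk⟩

theorem exists_sum_comp_eq_of_range_le_iSup_range [Module.Projective R P] {ι : Type*} [Fintype ι]
    {Q : ι → Type*} [∀ i, AddCommMonoid (Q i)] [∀ i, Module R (Q i)] (f : ∀ i, Q i →ₗ[R] M)
    (g : P →ₗ[R] M) (h : LinearMap.range g ≤ ⨆ i, LinearMap.range (f i)) :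
    ∃ k : ∀ i, P →ₗ[R] Q i, ∑ i, f i ∘ₗ k i = g := by
  classical
  rw [← range_lsum] at h
  obtain ⟨k, rfl⟩ := exists_comp_eq_of_range_le_range _ g h
  refine ⟨fun i => LinearMap.proj i ∘ₗ k, ?_⟩
  ext x
  simp only [LinearMap.lsum_apply, LinearMap.sum_apply, LinearMap.comp_apply]

theorem mem_span_of_range_le_iSup_range [Module.Projective R P] (s : Finset (P →ₗ[R] M))
    {S : P →ₗ[R] M} (hS : LinearMap.range S ≤ ⨆ T ∈ s, LinearMap.range T) :
    S ∈ Submodule.span (Module.End R P)ᵈᵐᵃ (s : Set (P →ₗ[R] M)) := by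
  rw [iSup_subtype'] at hS
  obtain ⟨A, rfl⟩ := exists_sum_comp_eq_of_range_le_iSup_range (fun T : s => (T : P →ₗ[R] M)) S hS
  exact Submodule.sum_mem _ fun T _ =>
    Submodule.smul_mem _ (DomMulAct.mk (A T)) (Submodule.subset_span T.2)

theorem exists_finset_subset_biSup_eq_of_fg {ι : Type*} {s : Set ι} {p : ι → Submodule R M}
    (h : (⨆ i ∈ s, p i).FG) : ∃ t : Finset ι, ↑t ⊆ s ∧ ⨆ i ∈ t, p i = ⨆ i ∈ s, p i := by
  have hcompact := (Submodule.fg_iff_compact _).mp h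
  obtain ⟨t, ht⟩ := CompleteLattice.IsCompactElement.exists_finset_of_le_iSup _ hcompact
    (fun i : s => p i) (iSup_subtype' (p := (· ∈ s)) (f := fun i _ => p i)).le
  have hts : ∀ i ∈ t.map (Function.Embedding.subtype _), i ∈ s :=
    fun _ => t.property_of_mem_map_subtype
  refine ⟨_, hts, (biSup_mono hts).antisymm (ht.trans (iSup₂_le fun i hi => ?_))⟩
  exact le_biSup p (Finset.mem_map_of_mem _ hi)

theorem stmt_12_general [Module.Projective R P] (I : Submodule (Module.End R P)ᵈᵐᵃ (P →ₗ[R] M))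
    (hfg : (⨆ S ∈ I, LinearMap.range S).FG) :
    I.FG ∧ (I : Set (P →ₗ[R] M)) = {T | LinearMap.range T ≤ ⨆ S ∈ I, LinearMap.range S} := by
  obtain ⟨s, hsI, hs⟩ := exists_finset_subset_biSup_eq_of_fg (s := (I : Set (P →ₗ[R] M))) hfg
  have range_le : ∀ T ∈ I, LinearMap.range T ≤ ⨆ S ∈ I, LinearMap.range S :=
    fun T hT => le_biSup LinearMap.range hT
  have mem_span : ∀ T : P →ₗ[R] M, LinearMap.range T ≤ ⨆ S ∈ I, LinearMap.range S →
      T ∈ Submodule.span (Module.End R P)ᵈᵐᵃ (s : Set (P →ₗ[R] M)) :=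
    fun T hT => mem_span_of_range_le_iSup_range s (hT.trans hs.ge)
  have span_le : Submodule.span (Module.End R P)ᵈᵐᵃ (s : Set (P →ₗ[R] M)) ≤ I :=
    Submodule.span_le.mpr hsI
  exact ⟨⟨s, span_le.antisymm fun T hT => mem_span T (range_le T hT)⟩,
    Set.Subset.antisymm range_le fun T hT => span_le (mem_span T hT)⟩

end Projective

namespace IsRightSubmodule

variable {I : Set (V →ₗ[D] W)}

/-- The right `L(V)`-submodule `I` as a bundled submodule. The right action of `L(V)` by
precomposition is encoded as a left action of the domain action type `L(V)ᵈᵐᵃ`. -/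
def toSubmodule_s12 (hI : IsRightSubmodule I) : Submodule (Module.End D V)ᵈᵐᵃ (V →ₗ[D] W) where
  carrier := I
  zero_mem' := hI.1
  add_mem' := hI.2.1 _ _
  smul_mem' a S hS := hI.2.2 S hS (DomMulAct.mk.symm a)

theorem rightFG_of_fg_toSubmodule (hI : IsRightSubmodule I) (hfg : hI.toSubmodule_s12.FG) :
    RightFG I := by
  obtain ⟨n, T, hT⟩ := Submodule.fg_iff_exists_fin_generating_family.mp hfg
  refine ⟨n, T, fun i => hT.le (Submodule.subset_span ⟨i, rfl⟩), fun S hS => ?_⟩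
  obtain ⟨c, hc⟩ := (Submodule.mem_span_range_iff_exists_fun _).mp (hT.ge hS)
  exact ⟨fun i => DomMulAct.mk.symm (c i), hc.symm⟩

end IsRightSubmodule

theorem stmt_12 (I : Set (V →ₗ[D] W)) (hI : IsRightSubmodule I)
    (hfin : FiniteDimensional D (imageOf I)) :
    RightFG I ∧ I = {T : V →ₗ[D] W | LinearMap.range T ≤ imageOf I} := by
  obtain ⟨hfg, hmem⟩ := stmt_12_general hI.toSubmodule_s12 (Module.Finite.iff_fg.mp hfin)
  exact ⟨hI.rightFG_of_fg_toSubmodule hfg, hmem⟩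
end

section
/- Let I be a left L(W)-submodule of L(V,W) such that the quotient V / (⋂_{T∈I} ker T) is finite-dimensional. Then I is finitely generated as a left L(W)-module. -/
variable {D V W : Type*} [DivisionRing D]
  [AddCommGroup V] [Module D V] [AddCommGroup W] [Module D W]

/-!
Since `V / ⋂_{T ∈ I} ker T` is Artinian, the common kernel is already cut out by finitely many
`T₁, …, Tₙ ∈ I`. Any `S` vanishing on it factors through the image of `(T₁, …, Tₙ) : V → Wⁿ`,
and injectivity of `W` extends the factorization to a map `Wⁿ → W`, whose components are the
coefficients of `S` in terms of the `Tᵢ`.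
-/

theorem exists_finset_iInf_eq_of_wellFoundedLT_Ici {ι α : Type*} [CompleteLattice α] (f : ι → α)
    [WellFoundedLT (Set.Ici (⨅ i, f i))] : ∃ s : Finset ι, ⨅ i ∈ s, f i = ⨅ i, f i := by
  classical
  let g (s : Finset ι) : Set.Ici (⨅ i, f i) := ⟨⨅ i ∈ s, f i, le_iInf₂ fun i _ ↦ iInf_le f i⟩
  obtain ⟨s, -, hs_min⟩ := exists_minimalFor_of_wellFoundedLT (fun _ ↦ True) g ⟨∅, trivial⟩
  refine ⟨s, le_antisymm (le_iInf fun i ↦ ?_) (g s).2⟩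
  have h_insert : g (insert i s) ≤ g s := biInf_mono fun _ ↦ Finset.mem_insert_of_mem
  calc ⨅ j ∈ s, f j ≤ ⨅ j ∈ insert i s, f j := hs_min trivial h_insert
    _ ≤ f i := iInf₂_le i (Finset.mem_insert_self i s)

section Module

variable {R M Q : Type*} [Ring R] [AddCommGroup M] [Module R M] [AddCommGroup Q] [Module R Q]

theorem exists_finset_iInf_eq_of_isArtinian_quotient {ι : Type*} (N : ι → Submodule R M)
    [IsArtinian R (M ⧸ ⨅ i, N i)] : ∃ s : Finset ι, ⨅ i ∈ s, N i = ⨅ i, N i :=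
  have : WellFoundedLT (Set.Ici (⨅ i, N i)) :=
    (Submodule.comapMkQRelIso (⨅ i, N i)).symm.toOrderEmbedding.wellFoundedLT
  exists_finset_iInf_eq_of_wellFoundedLT_Ici N

theorem baer_of_isSemisimpleRing [IsSemisimpleRing R] : Module.Baer R Q := fun J g ↦
  let ⟨h, hg⟩ := IsSemisimpleModule.extension_property J.subtype J.subtype_injective g
  ⟨h, fun x hx ↦ LinearMap.congr_fun hg ⟨x, hx⟩⟩

theorem exists_comp_eq_of_ker_le_ker {N : Type*} [AddCommGroup N] [Module R N]
    (hQ : Module.Baer R Q) (f : M →ₗ[R] N) (S : M →ₗ[R] Q)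
    (hfS : LinearMap.ker f ≤ LinearMap.ker S) : ∃ P : N →ₗ[R] Q, P ∘ₗ f = S := by
  let f' : M ⧸ LinearMap.ker f →ₗ[R] N := (LinearMap.ker f).liftQ f le_rfl
  have hf' : Function.Injective f' :=
    LinearMap.ker_eq_bot.mp (Submodule.ker_liftQ_eq_bot _ _ _ le_rfl)
  obtain ⟨P, hP⟩ := hQ.extension_property f' hf' ((LinearMap.ker f).liftQ S hfS)
  refine ⟨P, ?_⟩
  calc P ∘ₗ f = (P ∘ₗ f') ∘ₗ (LinearMap.ker f).mkQ := by
        rw [LinearMap.comp_assoc, Submodule.liftQ_mkQ]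
    _ = S := by rw [hP, Submodule.liftQ_mkQ]

variable {ι : Type*} {N : ι → Type*} [∀ i, AddCommGroup (N i)] [∀ i, Module R (N i)]

theorem exists_eq_sum_comp_of_iInf_ker_le_ker [Fintype ι] (hQ : Module.Baer R Q)
    (T : ∀ i, M →ₗ[R] N i) (S : M →ₗ[R] Q)
    (hTS : ⨅ i, LinearMap.ker (T i) ≤ LinearMap.ker S) :
    ∃ P : ∀ i, N i →ₗ[R] Q, S = ∑ i, P i ∘ₗ T i := by
  classical
  obtain ⟨P, rfl⟩ := exists_comp_eq_of_ker_le_ker hQ (LinearMap.pi T) S (by rwa [LinearMap.ker_pi])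
  refine ⟨fun i ↦ P ∘ₗ LinearMap.single R N i, LinearMap.ext fun v ↦ ?_⟩
  calc P (LinearMap.pi T v) = P (∑ i, Pi.single i (T i v)) := by
        rw [Finset.univ_sum_single]; rfl
    _ = (∑ i, (P ∘ₗ LinearMap.single R N i) ∘ₗ T i) v := by simp

theorem exists_finset_forall_eq_sum_comp_of_isArtinian_quotient (hQ : Module.Baer R Q)
    (T : ∀ i, M →ₗ[R] N i) [IsArtinian R (M ⧸ ⨅ i, LinearMap.ker (T i))] :
    ∃ s : Finset ι, ∀ S : M →ₗ[R] Q, ⨅ i, LinearMap.ker (T i) ≤ LinearMap.ker S →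
      ∃ P : ∀ i : s, N i →ₗ[R] Q, S = ∑ i : s, P i ∘ₗ T i := by
  obtain ⟨s, hs⟩ := exists_finset_iInf_eq_of_isArtinian_quotient fun i ↦ LinearMap.ker (T i)
  refine ⟨s, fun S hS ↦ exists_eq_sum_comp_of_iInf_ker_le_ker hQ (fun i : s ↦ T i) S ?_⟩
  rwa [← hs, iInf_subtype'] at hS

theorem stmt_13_general (hQ : Module.Baer R Q) (I : Set (M →ₗ[R] Q))
    [IsArtinian R (M ⧸ ⨅ T ∈ I, LinearMap.ker T)] :
    ∃ (n : ℕ) (T : Fin n → (M →ₗ[R] Q)), (∀ i, T i ∈ I) ∧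
      ∀ S ∈ I, ∃ P : Fin n → (Q →ₗ[R] Q), S = ∑ i, P i ∘ₗ T i := by
  have : IsArtinian R (M ⧸ ⨅ T : I, LinearMap.ker T.1) := by rwa [iInf_subtype]
  obtain ⟨s, hs⟩ :=
    exists_finset_forall_eq_sum_comp_of_isArtinian_quotient hQ fun T : I ↦ T.1
  let e := s.equivFin.symm
  refine ⟨s.card, fun i ↦ (e i).1.1, fun i ↦ (e i).1.2, fun S hS ↦ ?_⟩
  obtain ⟨P, hP⟩ := hs S (iInf_le (fun T : I ↦ LinearMap.ker T.1) ⟨S, hS⟩)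
  exact ⟨fun i ↦ P (e i), hP.trans (e.sum_comp fun T ↦ P T ∘ₗ T.1.1).symm⟩

end Module

theorem stmt_13 (I : Set (V →ₗ[D] W)) (hI : IsLeftSubmodule I)
    (hfin : FiniteDimensional D (V ⧸ (⨅ T ∈ I, LinearMap.ker T))) :
    LeftFG I :=
  stmt_13_general baer_of_isSemisimpleRing I
end
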